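/- Let q = 2^h, h > p, and r ≥ p. The code ZRM_{2^h}^p(r,m) is a Z_{2^h}-linear code of length 2^m and its cardinality satisfies log_2 |ZRM_{2^h}^p(r,m)| = Σ_{i=0}^{r-p} h·C(m,i) + Σ_{i=1}^{p} (h-i)·C(m, i+r-p), where C(m,i) denotes the binomial coefficient. -/

import Mathlib

open Finset

/-- The binary expansion of `i`, as a point of `ℤ₂^m`. -/
def bits (m : ℕ) (i : ℕ) : Fin m → ZMod 2 := fun j => if Nat.testBit i j.val then 1 else 0

/-- Admissibility condition on ANF coefficients for `ZRM_{2^h}^p(r,m)`: monomials of order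
at most `r - p` are free, a monomial of order `r - p + i` (for `1 ≤ i ≤ p`) must carry a
coefficient divisible by `2^i`, and monomials of order exceeding `r` do not occur. -/
def zrmCond (h p r m : ℕ) (c : Finset (Fin m) → ZMod (2 ^ h)) : Prop :=
  ∀ S : Finset (Fin m),
    (r < S.card → c S = 0) ∧
    (r - p < S.card → S.card ≤ r →
      ∃ u : ZMod (2 ^ h), c S = 2 ^ (S.card - (r - p)) * u)

/-- The `ℤ_{2^h}`-valued vector of length `2^m` associated with the generalized Boolean
function whose algebraic normal form has coefficients `c` (indexed by monomials, i.e. by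
subsets of the variables). -/
def anfVec (h m : ℕ) (c : Finset (Fin m) → ZMod (2 ^ h)) : Fin (2 ^ m) → ZMod (2 ^ h) :=
  fun i => ∑ S : Finset (Fin m), c S * ∏ α ∈ S, ((bits m i.val α).val : ZMod (2 ^ h))

/-- The code `ZRM_{2^h}^p(r,m)` as a set of vectors of length `2^m` over `ℤ_{2^h}`. -/
def ZRM (h p r m : ℕ) : Set (Fin (2 ^ m) → ZMod (2 ^ h)) :=
  {v | ∃ c : Finset (Fin m) → ZMod (2 ^ h), zrmCond h p r m c ∧ v = anfVec h m c}

lemma anfVec_add (h m : ℕ) (c d : Finset (Fin m) → ZMod (2 ^ h)) :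
    anfVec h m (c + d) = anfVec h m c + anfVec h m d := by
  funext i
  simp [anfVec, add_mul, Finset.sum_add_distrib]

lemma anfVec_smul (h m : ℕ) (s : ZMod (2 ^ h)) (c : Finset (Fin m) → ZMod (2 ^ h)) :
    anfVec h m (s • c) = s • anfVec h m c := by
  funext i
  simp [anfVec, Finset.mul_sum, mul_assoc]

/-- Evaluating at the indicator point of `S` sums the coefficients of the subsets of `S`. -/
lemma anfVec_eval (h m : ℕ) (S : Finset (Fin m)) : ∃ i : Fin (2 ^ m),
    ∀ c : Finset (Fin m) → ZMod (2 ^ h), anfVec h m c i = ∑ T ∈ S.powerset, c T := by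
  refine ⟨⟨Nat.ofBits (fun a : Fin m => decide (a ∈ S)), Nat.ofBits_lt_two_pow _⟩, fun c => ?_⟩
  have hb : ∀ T : Finset (Fin m),
      ∏ α ∈ T, ((bits m (Nat.ofBits (fun a : Fin m => decide (a ∈ S))) α).val : ZMod (2 ^ h))
        = if T ∈ S.powerset then 1 else 0 := by
    intro T
    have hv : ∀ α : Fin m,
        ((bits m (Nat.ofBits (fun a : Fin m => decide (a ∈ S))) α).val : ZMod (2 ^ h))
          = if α ∈ S then 1 else 0 := by
      intro α
      by_cases hα : α ∈ S <;> simp [bits, Nat.testBit_ofBits_lt, hα, ZMod.val_one]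
    simp only [hv, Finset.mem_powerset]
    split_ifs with hT
    · exact Finset.prod_eq_one fun α hα => by simp [hT hα]
    · obtain ⟨α, hα, hαS⟩ := Finset.not_subset.mp hT
      exact Finset.prod_eq_zero hα (by simp [hαS])
  simp only [anfVec, hb, mul_ite, mul_one, mul_zero]
  rw [← Finset.sum_filter]
  congr 1
  ext T
  simp

lemma anfVec_injective (h m : ℕ) : Function.Injective (anfVec h m) := by
  intro c d hcd
  funext S
  induction S using Finset.strongInduction with
  | H S ih =>
    obtain ⟨i, hi⟩ := anfVec_eval h m S
    have h1 : ∑ T ∈ S.powerset, c T = ∑ T ∈ S.powerset, d T := by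
      rw [← hi, ← hi, hcd]
    rw [← Finset.add_sum_erase _ _ (Finset.mem_powerset_self S),
      ← Finset.add_sum_erase _ d (Finset.mem_powerset_self S)] at h1
    have h2 : ∑ T ∈ S.powerset.erase S, c T = ∑ T ∈ S.powerset.erase S, d T := by
      refine Finset.sum_congr rfl fun T hT => ih T ?_
      rw [Finset.mem_erase, Finset.mem_powerset] at hT
      exact lt_of_le_of_ne hT.2 hT.1
    rw [h2] at h1
    exact add_right_cancel h1

/-- The number of multiples of `2 ^ j` in `ZMod (2 ^ h)`. -/
lemma card_mult (h j : ℕ) (hj : j ≤ h) :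
    Nat.card {x : ZMod (2 ^ h) // ∃ u : ZMod (2 ^ h), x = 2 ^ j * u} = 2 ^ (h - j) := by
  have e : ∀ x : ZMod (2 ^ h), (∃ u : ZMod (2 ^ h), x = 2 ^ j * u) ↔
      x ∈ AddSubgroup.zmultiples (((2 ^ j : ℕ) : ZMod (2 ^ h))) := by
    intro x
    rw [AddSubgroup.mem_zmultiples_iff]
    constructor
    · rintro ⟨u, rfl⟩
      obtain ⟨k, rfl⟩ := ZMod.intCast_surjective u
      exact ⟨k, by simp [mul_comm]⟩
    · rintro ⟨k, rfl⟩
      exact ⟨k, by simp [mul_comm]⟩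
  rw [Nat.card_congr (Equiv.subtypeEquivRight e)]
  have := Nat.card_zmultiples (((2 ^ j : ℕ) : ZMod (2 ^ h)))
  rw [ZMod.addOrderOf_coe _ (by positivity), Nat.gcd_eq_right (pow_dvd_pow 2 hj),
    Nat.pow_div hj (by norm_num)] at this
  exact this

/-- The exponent contributed by a monomial of order `k`. -/
def zrmExp (h p r k : ℕ) : ℕ := if k ≤ r - p then h else if k ≤ r then h - (k - (r - p)) else 0

lemma card_coeff (h p r k : ℕ) (hph : p < h) (hpr : p ≤ r) :
    Nat.card {x : ZMod (2 ^ h) // (r < k → x = 0) ∧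
      (r - p < k → k ≤ r → ∃ u : ZMod (2 ^ h), x = 2 ^ (k - (r - p)) * u)}
      = 2 ^ zrmExp h p r k := by
  unfold zrmExp
  split_ifs with h1 h2
  · rw [Nat.card_congr (Equiv.subtypeUnivEquiv (fun x => ⟨fun _ => by omega, fun _ => by omega⟩)),
      Nat.card_zmod]
  · rw [← card_mult h (k - (r - p)) (by omega)]
    refine Nat.card_congr (Equiv.subtypeEquivRight fun x => ?_)
    exact ⟨fun hx => hx.2 (by omega) h2, fun hx => ⟨fun _ => by omega, fun _ _ => hx⟩⟩
  · rw [pow_zero, Nat.card_eq_one_iff_unique]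
    refine ⟨⟨fun a b => Subtype.ext ?_⟩, ⟨⟨0, fun _ => rfl, fun _ _ => by omega⟩⟩⟩
    rw [a.2.1 (by omega), b.2.1 (by omega)]

lemma sum_exp (h p r m : ℕ) (hpr : p ≤ r) :
    ∑ S : Finset (Fin m), zrmExp h p r S.card =
      ∑ i ∈ Finset.range (r - p + 1), h * m.choose i
            + ∑ i ∈ Finset.Icc 1 p, (h - i) * m.choose (i + (r - p)) := by
  have h0 := Finset.sum_powerset_apply_card (zrmExp h p r) (x := (Finset.univ : Finset (Fin m)))
  rw [Finset.powerset_univ, Finset.card_univ, Fintype.card_fin] at h0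
  rw [h0]
  have h1 : ∑ k ∈ Finset.range (m + 1), m.choose k • zrmExp h p r k
      = ∑ k ∈ Finset.range (m + r + 1), m.choose k • zrmExp h p r k := by
    refine Finset.sum_subset (Finset.range_mono (by omega)) fun k _ hk => ?_
    rw [Finset.mem_range] at hk
    rw [Nat.choose_eq_zero_of_lt (by omega), zero_smul]
  have h2 : ∑ k ∈ Finset.range (r + 1), m.choose k • zrmExp h p r k
      = ∑ k ∈ Finset.range (m + r + 1), m.choose k • zrmExp h p r k := by
    refine Finset.sum_subset (Finset.range_mono (by omega)) fun k _ hk => ?_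
    rw [Finset.mem_range] at hk
    rw [zrmExp, if_neg (by omega), if_neg (by omega), smul_zero]
  rw [h1, ← h2, show r + 1 = (r - p + 1) + p by omega, Finset.sum_range_add]
  congr 1
  · refine Finset.sum_congr rfl fun k hk => ?_
    rw [Finset.mem_range] at hk
    rw [zrmExp, if_pos (by omega), smul_eq_mul, mul_comm]
  · have h3 : Finset.Icc 1 p = Finset.Ico (0 + 1) (p + 1) := by
      ext; simp
    rw [h3, ← Finset.sum_Ico_add', ← Finset.range_eq_Ico]
    refine Finset.sum_congr rfl fun k hk => ?_
    rw [Finset.mem_range] at hk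
    rw [zrmExp, if_neg (by omega), if_pos (by omega), smul_eq_mul, mul_comm]
    congr 2 <;> omega

/-- `ZRM_{2^h}^p(r,m)` is a linear code over `ℤ_{2^h}` of length `2^m`, and
`log₂ |ZRM_{2^h}^p(r,m)| = ∑_{i=0}^{r-p} h·C(m,i) + ∑_{i=1}^{p} (h-i)·C(m,i+r-p)`. -/
theorem stmt_5 (h p r m : ℕ) (hph : p < h) (hpr : p ≤ r) :
    (∀ u ∈ ZRM h p r m, ∀ v ∈ ZRM h p r m, u + v ∈ ZRM h p r m) ∧
    (∀ s : ZMod (2 ^ h), ∀ v ∈ ZRM h p r m, s • v ∈ ZRM h p r m) ∧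
    Nat.card (ZRM h p r m) =
      2 ^ (∑ i ∈ Finset.range (r - p + 1), h * m.choose i
            + ∑ i ∈ Finset.Icc 1 p, (h - i) * m.choose (i + (r - p))) := by
  refine ⟨?_, ?_, ?_⟩
  · rintro _ ⟨c, hc, rfl⟩ _ ⟨d, hd, rfl⟩
    refine ⟨c + d, fun S => ⟨fun hS => ?_, fun h1 h2 => ?_⟩, (anfVec_add h m c d).symm⟩
    · simp [(hc S).1 hS, (hd S).1 hS]
    · obtain ⟨u, hu⟩ := (hc S).2 h1 h2
      obtain ⟨v, hv⟩ := (hd S).2 h1 h2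
      exact ⟨u + v, by rw [Pi.add_apply, hu, hv, mul_add]⟩
  · rintro s _ ⟨c, hc, rfl⟩
    refine ⟨s • c, fun S => ⟨fun hS => ?_, fun h1 h2 => ?_⟩, (anfVec_smul h m s c).symm⟩
    · simp [(hc S).1 hS]
    · obtain ⟨u, hu⟩ := (hc S).2 h1 h2
      exact ⟨s * u, by rw [Pi.smul_apply, hu, smul_eq_mul]; ring⟩
  · have himg : ZRM h p r m = anfVec h m '' {c | zrmCond h p r m c} := by
      ext v
      constructor
      · rintro ⟨c, hc, rfl⟩
        exact ⟨c, hc, rfl⟩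
      · rintro ⟨c, hc, rfl⟩
        exact ⟨c, hc, rfl⟩
    rw [himg, Nat.card_image_of_injective (anfVec_injective h m), ← sum_exp h p r m hpr,
      ← Finset.prod_pow_eq_pow_sum]
    have e := Nat.card_congr (Equiv.subtypePiEquivPi (α := Finset (Fin m))
      (β := fun _ => ZMod (2 ^ h))
      (p := fun S x => (r < S.card → x = 0) ∧ (r - p < S.card → S.card ≤ r →
        ∃ u : ZMod (2 ^ h), x = 2 ^ (S.card - (r - p)) * u)))
    rw [Nat.card_pi] at e
    refine e.trans (Finset.prod_congr rfl fun S _ => ?_)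
    exact card_coeff h p r S.card hph hpr
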